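/- Let A > 0 and let q₀ : ℝ → ℂ be measurable with ∫_{−∞}^0 |q₀(y)| dy < ∞ and ∫_0^∞ |q₀(y) − A| dy < ∞. Then for every real k ≠ 0 there exists a unique pair of bounded continuous functions ψ₁, ψ₃ : ℝ → ℂ satisfying, for all x ∈ ℝ, the Volterra integral equations ψ₁(x) = 1 + ∫_{−∞}^x q₀(y) ψ₃(y) dy and ψ₃(x) = A/(2ik) + ∫_{−∞}^x e^{2ik(x−y)} (A − conj(q₀(−y))) ψ₁(y) dy + (A/(2ik)) ∫_{−∞}^x q₀(y) (1 − e^{2ik(x−y)}) ψ₃(y) dy. -/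

import Mathlib

open Complex MeasureTheory
open Set Filter Function
open scoped BoundedContinuousFunction NNReal

/-!
The Volterra equations are the integrated form of `ψ₁' = q ψ₃`, `ψ₃' = 2ik (ψ₃ - c ψ₁) + p ψ₁`,
where `c = A / (2ik)` and `p = A - conj (q₀ (-·))`. At `-∞`, where `q` and `p` vanish, its solutions
are `u (1, c) + s e^{2ikx} (0, 1)`; at `+∞`, where `q` and `p` tend to `2ikc = A`, they are
`φ (1, 0) + h e^{2ikx} (c, 1)`. Variation of constants turns the system into a linear equation for
`(u, s)` with kernel integrable at `-∞`, and into one for `(φ, h)` with kernel integrable at `+∞`.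
The two pairs differ by a smooth bounded change of coordinates. Applying this change with its value
at `0` for `x ≤ 0` and with its value at `x` for `x ≥ 0` gives a single linear Volterra equation
whose kernel is integrable on all of `ℝ`. Its solution operator halves distances in the weight
`exp (2 ∫_{-∞}^x ‖K‖)`, so an iterate of it is a contraction of the bounded continuous functions.
-/

section Primitive

variable {E : Type*} [NormedAddCommGroup E] {f : ℝ → E}

theorem intervalIntegrable_of_integrableOn_Iic (hf : ∀ x, IntegrableOn f (Iic x)) (a b : ℝ) :
    IntervalIntegrable f volume a b :=
  intervalIntegrable_iff.2 ((hf (max a b)).mono_set fun _ hy => hy.2)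

variable [NormedSpace ℝ E]

theorem integral_Iic_eq_add_intervalIntegral (hf : ∀ x, IntegrableOn f (Iic x)) (a x : ℝ) :
    ∫ y in Iic x, f y = (∫ y in Iic a, f y) + ∫ y in a..x, f y := by
  rw [← intervalIntegral.integral_Iic_sub_Iic (hf a) (hf x), add_sub_cancel]

theorem continuous_integral_Iic (hf : ∀ x, IntegrableOn f (Iic x)) :
    Continuous fun x => ∫ y in Iic x, f y := by
  rw [funext (integral_Iic_eq_add_intervalIntegral hf 0)]
  exact continuous_const.add
    (intervalIntegral.continuous_primitive (intervalIntegrable_of_integrableOn_Iic hf) 0)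

theorem ae_hasDerivAt_integral_Iic [CompleteSpace E] (hf : Integrable f) :
    ∀ᵐ x, HasDerivAt (fun z => ∫ y in Iic z, f y) (f x) x := by
  filter_upwards [LocallyIntegrable.ae_hasDerivAt_integral hf.locallyIntegrable] with x hx
  rw [funext (integral_Iic_eq_add_intervalIntegral (fun _ => hf.integrableOn) 0)]
  exact (hx 0).const_add _

end Primitive

theorem integrable_clm_apply_of_bounded {α E F : Type*} [MeasurableSpace α] {μ : Measure α}
    [NormedAddCommGroup E] [NormedSpace ℝ E] [NormedAddCommGroup F] [NormedSpace ℝ F]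
    {K : α → E →L[ℝ] F} (hK : Integrable K μ) {Y : α → E} (hY : AEStronglyMeasurable Y μ)
    {C : ℝ} (hC : ∀ x, ‖Y x‖ ≤ C) : Integrable (fun x => K x (Y x)) μ :=
  (ContinuousLinearMap.id ℝ (E →L[ℝ] F)).integrable_of_bilin_of_bdd_right C hK hY (ae_of_all _ hC)

/-- The Bielecki weight `exp (2 ∫_{-∞}^x w)`: integrating against `w` from `-∞` halves any bound
proportional to it, see `integral_mul_bieleckiWeight_le`. -/
noncomputable def bieleckiWeight (w : ℝ → ℝ) (x : ℝ) : ℝ :=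
  Real.exp (2 * ∫ y in Iic x, w y)

section BieleckiWeight

variable {w : ℝ → ℝ}

theorem bieleckiWeight_pos (w : ℝ → ℝ) (x : ℝ) : 0 < bieleckiWeight w x :=
  Real.exp_pos _

theorem one_le_bieleckiWeight (hw₀ : ∀ y, 0 ≤ w y) (x : ℝ) : 1 ≤ bieleckiWeight w x :=
  Real.one_le_exp (mul_nonneg zero_le_two (integral_nonneg hw₀))

theorem bieleckiWeight_le (hw₀ : ∀ y, 0 ≤ w y) (hw : Integrable w) (x : ℝ) :
    bieleckiWeight w x ≤ Real.exp (2 * ∫ y, w y) :=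
  Real.exp_le_exp.2 <| mul_le_mul_of_nonneg_left
    (setIntegral_le_integral hw (ae_of_all _ hw₀)) zero_le_two

theorem monotone_bieleckiWeight (hw₀ : ∀ y, 0 ≤ w y) (hw : Integrable w) :
    Monotone (bieleckiWeight w) := fun _ _ hab =>
  Real.exp_le_exp.2 <| mul_le_mul_of_nonneg_left (setIntegral_mono_set hw.integrableOn
    (ae_of_all _ hw₀) (Iic_subset_Iic.2 hab).eventuallyLE) zero_le_two

theorem continuous_bieleckiWeight (hw : Integrable w) : Continuous (bieleckiWeight w) :=
  Real.continuous_exp.comp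
    ((continuous_integral_Iic fun _ => hw.integrableOn).const_mul 2)

theorem integrable_mul_bieleckiWeight (hw₀ : ∀ y, 0 ≤ w y) (hw : Integrable w) :
    Integrable fun y => w y * bieleckiWeight w y :=
  hw.mul_bdd (continuous_bieleckiWeight hw).aestronglyMeasurable <| ae_of_all _ fun y => by
    rw [Real.norm_of_nonneg (bieleckiWeight_pos w y).le]
    exact bieleckiWeight_le hw₀ hw y

theorem ae_deriv_bieleckiWeight (hw : Integrable w) :
    ∀ᵐ x, deriv (bieleckiWeight w) x = 2 * (w x * bieleckiWeight w x) := by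
  filter_upwards [ae_hasDerivAt_integral_Iic hw] with x hx
  have h : HasDerivAt (bieleckiWeight w) (bieleckiWeight w x * (2 * w x)) x :=
    (hx.const_mul 2).exp
  rw [h.deriv]
  ring

theorem integral_mul_bieleckiWeight_le (hw₀ : ∀ y, 0 ≤ w y) (hw : Integrable w) (x : ℝ) :
    ∫ y in Iic x, w y * bieleckiWeight w y ≤ bieleckiWeight w x / 2 := by
  have hint := (integrable_mul_bieleckiWeight hw₀ hw).integrableOn (s := Iic x)
  refine le_of_tendsto (intervalIntegral_tendsto_integral_Iic x hint tendsto_id) ?_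
  filter_upwards [eventually_le_atBot x] with a ha
  have hmono := monotone_bieleckiWeight hw₀ hw
  have hderiv : ∫ y in a..x, deriv (bieleckiWeight w) y =
      2 * ∫ y in a..x, w y * bieleckiWeight w y := by
    rw [← intervalIntegral.integral_const_mul]
    exact intervalIntegral.integral_congr_ae ((ae_deriv_bieleckiWeight hw).mono fun _ h _ => h)
  have hle := (hmono.monotoneOn (uIcc a x)).intervalIntegral_deriv_mem_uIcc
  rw [uIcc_of_le (sub_nonneg.2 (hmono ha)), hderiv] at hle
  rw [id_eq]
  linarith [hle.2, bieleckiWeight_pos w a]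

end BieleckiWeight

theorem existsUnique_isFixedPt_of_contractingWith_iterate {α : Type*} [MetricSpace α]
    [CompleteSpace α] [Nonempty α] {f : α → α} {C : ℝ≥0} {n : ℕ} (hf : ContractingWith C f^[n]) :
    ∃! x, IsFixedPt f x :=
  ⟨_, hf.isFixedPt_fixedPoint_iterate, fun _ hx => hf.fixedPoint_unique (hx.iterate n)⟩

/-- `Y` is a bounded continuous solution of the linear Volterra equation
`Y x = Y₀ + ∫_{-∞}^x K y (Y y) dy`, the integrated form of `Y' = K Y`, `Y(-∞) = Y₀`. -/
structure IsBoundedVolterraSolution {E : Type*} [NormedAddCommGroup E] [NormedSpace ℝ E]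
    (K : ℝ → E →L[ℝ] E) (Y₀ : E) (Y : ℝ → E) : Prop where
  continuous : Continuous Y
  bounded : ∃ C, ∀ x, ‖Y x‖ ≤ C
  eq_add_integral : ∀ x, Y x = Y₀ + ∫ y in Iic x, K y (Y y)

section Volterra

variable {E : Type*} [NormedAddCommGroup E] [NormedSpace ℝ E] {K : ℝ → E →L[ℝ] E}

theorem IsBoundedVolterraSolution.integrableOn {Y₀ : E} {Y : ℝ → E}
    (hY : IsBoundedVolterraSolution K Y₀ Y) {s : Set ℝ} (hK : IntegrableOn K s) :
    IntegrableOn (fun y => K y (Y y)) s :=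
  let ⟨_, hC⟩ := hY.bounded
  integrable_clm_apply_of_bounded hK hY.continuous.aestronglyMeasurable hC

theorem integrable_clm_apply_boundedContinuousFunction (hK : Integrable K) (Y : ℝ →ᵇ E) :
    Integrable fun y => K y (Y y) :=
  integrable_clm_apply_of_bounded hK Y.continuous.aestronglyMeasurable Y.norm_coe_le_norm

/-- The Volterra operator `Y ↦ Y₀ + ∫_{-∞}^x K y (Y y) dy` on bounded continuous functions. -/
noncomputable def volterraOperator (hK : Integrable K) (Y₀ : E) (Y : ℝ →ᵇ E) : ℝ →ᵇ E :=
  BoundedContinuousFunction.ofNormedAddCommGroup (fun x => Y₀ + ∫ y in Iic x, K y (Y y))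
    (continuous_const.add (continuous_integral_Iic fun _ =>
      (integrable_clm_apply_boundedContinuousFunction hK Y).integrableOn))
    (‖Y₀‖ + ∫ y, ‖K y (Y y)‖) fun x => (norm_add_le _ _).trans <| by
      gcongr
      exact (norm_integral_le_integral_norm _).trans (setIntegral_le_integral
        (integrable_clm_apply_boundedContinuousFunction hK Y).norm
        (ae_of_all _ fun _ => norm_nonneg _))

@[simp]
theorem volterraOperator_apply (hK : Integrable K) (Y₀ : E) (Y : ℝ →ᵇ E) (x : ℝ) :
    volterraOperator hK Y₀ Y x = Y₀ + ∫ y in Iic x, K y (Y y) :=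
  rfl

theorem norm_volterraOperator_sub_le (hK : Integrable K) (Y₀ : E) {Y Z : ℝ →ᵇ E} {C : ℝ}
    (h : ∀ x, ‖Y x - Z x‖ ≤ C * bieleckiWeight (‖K ·‖) x) (x : ℝ) :
    ‖volterraOperator hK Y₀ Y x - volterraOperator hK Y₀ Z x‖ ≤
      C / 2 * bieleckiWeight (‖K ·‖) x := by
  set ρ := bieleckiWeight (‖K ·‖)
  have hK₀ : ∀ y, 0 ≤ ‖K y‖ := fun y => norm_nonneg _
  have hC : 0 ≤ C :=
    nonneg_of_mul_nonneg_left ((norm_nonneg _).trans (h x)) (bieleckiWeight_pos _ x)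
  have hint (W : ℝ →ᵇ E) : IntegrableOn (fun y => K y (W y)) (Iic x) :=
    (integrable_clm_apply_boundedContinuousFunction hK W).integrableOn
  calc ‖volterraOperator hK Y₀ Y x - volterraOperator hK Y₀ Z x‖
      = ‖∫ y in Iic x, K y (Y y - Z y)‖ := by
        simp only [volterraOperator_apply, add_sub_add_left_eq_sub, map_sub]
        rw [integral_sub (hint Y) (hint Z)]
    _ ≤ ∫ y in Iic x, C * (‖K y‖ * ρ y) := by
        refine norm_integral_le_of_norm_le
          ((integrable_mul_bieleckiWeight hK₀ hK.norm).integrableOn.const_mul C)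
          (ae_of_all _ fun y => ?_)
        calc ‖K y (Y y - Z y)‖ ≤ ‖K y‖ * (C * ρ y) := (K y).le_opNorm_of_le (h y)
          _ = C * (‖K y‖ * ρ y) := mul_left_comm _ _ _
    _ = C * ∫ y in Iic x, ‖K y‖ * ρ y := integral_const_mul _ _
    _ ≤ C * (ρ x / 2) := by
        gcongr
        exact integral_mul_bieleckiWeight_le hK₀ hK.norm x
    _ = C / 2 * ρ x := by ring

theorem norm_iterate_volterraOperator_sub_le (hK : Integrable K) (Y₀ : E) (Y Z : ℝ →ᵇ E) (n : ℕ)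
    (x : ℝ) : ‖(volterraOperator hK Y₀)^[n] Y x - (volterraOperator hK Y₀)^[n] Z x‖ ≤
      dist Y Z / 2 ^ n * bieleckiWeight (‖K ·‖) x := by
  induction n generalizing x with
  | zero =>
    rw [pow_zero, div_one, ← dist_eq_norm]
    exact (BoundedContinuousFunction.dist_coe_le_dist x).trans
      (le_mul_of_one_le_right dist_nonneg (one_le_bieleckiWeight (fun _ => norm_nonneg _) x))
  | succ n ih =>
    rw [iterate_succ_apply', iterate_succ_apply', pow_succ, ← div_div]
    exact norm_volterraOperator_sub_le hK Y₀ ih x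

theorem exists_contractingWith_iterate_volterraOperator (hK : Integrable K) (Y₀ : E) :
    ∃ n, ContractingWith (1 / 2) (volterraOperator hK Y₀)^[n] := by
  set M : ℝ := Real.exp (2 * ∫ y, ‖K y‖)
  obtain ⟨n, hn⟩ : ∃ n : ℕ, 2 * M < 2 ^ n := pow_unbounded_of_one_lt _ one_lt_two
  refine ⟨n, NNReal.half_lt_self one_ne_zero, LipschitzWith.of_dist_le_mul fun Y Z => ?_⟩
  refine (BoundedContinuousFunction.dist_le (by positivity)).2 fun x => ?_
  calc dist ((volterraOperator hK Y₀)^[n] Y x) ((volterraOperator hK Y₀)^[n] Z x)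
      ≤ dist Y Z / 2 ^ n * bieleckiWeight (‖K ·‖) x := by
        rw [dist_eq_norm]
        exact norm_iterate_volterraOperator_sub_le hK Y₀ Y Z n x
    _ ≤ dist Y Z / 2 ^ n * (2 ^ n / 2) := by
        gcongr
        linarith [bieleckiWeight_le (fun y => norm_nonneg (K y)) hK.norm x]
    _ = ((1 / 2 : ℝ≥0) : ℝ) * dist Y Z := by
        push_cast
        field_simp

theorem existsUnique_isBoundedVolterraSolution [CompleteSpace E] (hK : Integrable K) (Y₀ : E) :
    ∃! Y, IsBoundedVolterraSolution K Y₀ Y := by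
  obtain ⟨n, hn⟩ := exists_contractingWith_iterate_volterraOperator hK Y₀
  obtain ⟨Y, hY, hunique⟩ := existsUnique_isFixedPt_of_contractingWith_iterate hn
  refine ⟨Y, ⟨Y.continuous, ⟨_, Y.norm_coe_le_norm⟩, fun x => (DFunLike.congr_fun hY x).symm⟩, ?_⟩
  rintro Z ⟨hZ, ⟨C, hC⟩, hZeq⟩
  let Zb : ℝ →ᵇ E := .ofNormedAddCommGroup Z hZ C hC
  have hZb : Zb = Y := hunique Zb (DFunLike.ext _ _ fun x => (hZeq x).symm)
  exact congrArg DFunLike.coe hZb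

end Volterra

section ProductRule

variable {E F : Type*} [NormedAddCommGroup E] [NormedSpace ℝ E] [NormedAddCommGroup F]
  [NormedSpace ℝ F] {a b : ℝ}

theorem absolutelyContinuousOnInterval_integral {f : ℝ → E}
    (hf : ∀ a b, IntervalIntegrable f volume a b) :
    AbsolutelyContinuousOnInterval (fun x => ∫ y in a..x, f y) a b := by
  have h := (hf a b).norm.absolutelyContinuousOnInterval_intervalIntegral (c := a) left_mem_uIcc
  refine squeeze_zero (fun t => Finset.sum_nonneg fun i _ => dist_nonneg)
    (fun t => Finset.sum_le_sum fun i _ => ?_) h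
  rw [dist_eq_norm, dist_eq_norm, intervalIntegral.integral_interval_sub_left (hf _ _) (hf _ _),
    intervalIntegral.integral_interval_sub_left (hf _ _).norm (hf _ _).norm, Real.norm_eq_abs]
  exact intervalIntegral.norm_integral_le_abs_integral_norm

theorem norm_clm_apply_sub_le {A B : E →L[ℝ] F} {u v : E} {C D : ℝ} (hA : ‖A‖ ≤ C)
    (hv : ‖v‖ ≤ D) : ‖A u - B v‖ ≤ C * ‖u - v‖ + D * ‖A - B‖ :=
  calc ‖A u - B v‖ = ‖A (u - v) + (A - B) v‖ := by simp
    _ ≤ ‖A (u - v)‖ + ‖(A - B) v‖ := norm_add_le _ _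
    _ ≤ C * ‖u - v‖ + D * ‖A - B‖ := by
      rw [mul_comm D]
      gcongr
      · exact A.le_of_opNorm_le hA _
      · exact (A - B).le_opNorm_of_le hv

theorem absolutelyContinuousOnInterval_clm_apply {G : ℝ → E →L[ℝ] F} {Y : ℝ → E}
    (hG : AbsolutelyContinuousOnInterval G a b) (hY : AbsolutelyContinuousOnInterval Y a b) :
    AbsolutelyContinuousOnInterval (fun x => G x (Y x)) a b := by
  obtain ⟨C, hC⟩ := hG.exists_bound
  obtain ⟨D, hD⟩ := hY.exists_bound
  unfold AbsolutelyContinuousOnInterval at hG hY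
  apply squeeze_zero' (Eventually.of_forall fun _ => Finset.sum_nonneg fun _ _ => dist_nonneg) ?_
    (by simpa using (hY.const_mul C).add (hG.const_mul D))
  rw [eventually_inf_principal]
  filter_upwards with (n, I) hI
  simp only [AbsolutelyContinuousOnInterval.disjWithin, mem_ofPred_eq] at hI
  simp only [Finset.mul_sum, ← Finset.sum_add_distrib, dist_eq_norm]
  exact Finset.sum_le_sum fun i hi =>
    norm_clm_apply_sub_le (hC _ (hI.left i hi).1) (hD _ (hI.left i hi).2)

theorem intervalIntegrable_clm_apply {G : ℝ → E →L[ℝ] F} (hG : Continuous G) {f : ℝ → E}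
    (hf : IntervalIntegrable f volume a b) :
    IntervalIntegrable (fun y => G y (f y)) volume a b := by
  obtain ⟨C, hC⟩ := isCompact_uIcc.exists_bound_of_continuousOn (hG.continuousOn (s := uIcc a b))
  refine intervalIntegrable_iff.2 <|
    (ContinuousLinearMap.id ℝ (E →L[ℝ] F)).integrable_of_bilin_of_bdd_left C
      hG.aestronglyMeasurable ?_ (intervalIntegrable_iff.1 hf)
  exact (ae_restrict_mem measurableSet_uIoc).mono fun y hy => hC y (uIoc_subset_uIcc hy)

theorem clm_apply_eq_add_intervalIntegral [CompleteSpace E] [CompleteSpace F] {G : ℝ → E →L[ℝ] F}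
    (hG : ContDiff ℝ 1 G) {Y f : ℝ → E} (hf : ∀ a b, IntervalIntegrable f volume a b)
    (hY : ∀ x, Y x = Y a + ∫ y in a..x, f y) (b : ℝ) :
    G b (Y b) = G a (Y a) + ∫ y in a..b, (deriv G y (Y y) + G y (f y)) := by
  have hYcont : Continuous Y := by
    rw [funext hY]
    exact continuous_const.add (intervalIntegral.continuous_primitive hf a)
  have hd (a b : ℝ) : IntervalIntegrable (fun y => deriv G y (Y y) + G y (f y)) volume a b :=
    (((hG.continuous_deriv le_rfl).clm_apply hYcont).intervalIntegrable a b).add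
      (intervalIntegrable_clm_apply hG.continuous (hf a b))
  have hYac : AbsolutelyContinuousOnInterval Y a b := by
    rw [funext hY]
    exact (LipschitzWith.const (Y a)).lipschitzOnWith.absolutelyContinuousOnInterval.add
      (absolutelyContinuousOnInterval_integral hf)
  have hYderiv : ∀ᵐ x, x ∈ uIcc a b → HasDerivAt Y (f x) x := by
    filter_upwards [(hf a b).ae_hasDerivAt_integral] with x hx hmem
    rw [funext hY]
    exact (hx hmem a left_mem_uIcc).const_add _
  have hac := (absolutelyContinuousOnInterval_clm_apply
    hG.contDiffOn.absolutelyContinuousOnInterval hYac).sub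
    (absolutelyContinuousOnInterval_integral (a := a) hd)
  obtain ⟨C, hC⟩ := hac.const_of_ae_hasDerivAt_zero <| by
    filter_upwards [hYderiv, (hd a b).ae_hasDerivAt_integral] with x hYx hdx hmem
    have hGx := (hG.differentiable one_ne_zero x).hasDerivAt
    simpa using (hGx.clm_apply (hYx hmem)).sub (hdx hmem a left_mem_uIcc)
  have heq := (hC b right_mem_uIcc).trans (hC a left_mem_uIcc).symm
  simp only [Pi.sub_apply, intervalIntegral.integral_same, sub_zero] at heq
  exact sub_eq_iff_eq_add.1 heq

end ProductRule

section Gauge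

variable {E : Type*} [NormedAddCommGroup E] [NormedSpace ℝ E] [CompleteSpace E]
  {K L G : ℝ → E →L[ℝ] E} {Y₀ : E} {Y : ℝ → E}

theorem IsBoundedVolterraSolution.clm_apply_eq_add_integral {A : E →L[ℝ] E} {x : ℝ}
    (hY : IsBoundedVolterraSolution K Y₀ Y) (hK : IntegrableOn K (Iic x))
    (hA : ∀ y ≤ x, A * K y = L y * A) : A (Y x) = A Y₀ + ∫ y in Iic x, L y (A (Y y)) := by
  have hLA : EqOn (fun y => L y (A (Y y))) (fun y => A (K y (Y y))) (Iic x) := fun y hy =>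
    (DFunLike.congr_fun (hA y hy) (Y y)).symm
  rw [setIntegral_congr_fun measurableSet_Iic hLA, A.integral_comp_comm (hY.integrableOn hK),
    ← map_add, ← hY.eq_add_integral]

theorem IsBoundedVolterraSolution.clm_apply_eq_add_intervalIntegral {a b : ℝ}
    (hY : IsBoundedVolterraSolution K Y₀ Y) (hK : ∀ x, IntegrableOn K (Iic x))
    (hG : ContDiff ℝ 1 G) (hGK : ∀ y ∈ Ioc a b, deriv G y + G y * K y = L y * G y) (hab : a ≤ b) :
    G b (Y b) = G a (Y a) + ∫ y in a..b, L y (G y (Y y)) := by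
  have hKY (x : ℝ) : IntegrableOn (fun y => K y (Y y)) (Iic x) := hY.integrableOn (hK x)
  have hYa (x : ℝ) : Y x = Y a + ∫ y in a..x, K y (Y y) := by
    rw [hY.eq_add_integral x, hY.eq_add_integral a, add_assoc,
      ← integral_Iic_eq_add_intervalIntegral hKY]
  rw [_root_.clm_apply_eq_add_intervalIntegral hG (intervalIntegrable_of_integrableOn_Iic hKY) hYa,
    intervalIntegral.integral_of_le hab, intervalIntegral.integral_of_le hab]
  exact congrArg _ <| setIntegral_congr_fun measurableSet_Ioc fun y hy =>
    DFunLike.congr_fun (hGK y hy) (Y y)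

theorem IsBoundedVolterraSolution.gauge (hY : IsBoundedVolterraSolution K Y₀ Y)
    (hK : ∀ x, IntegrableOn K (Iic x)) (hL : ∀ x, IntegrableOn L (Iic x)) (hG : ContDiff ℝ 1 G)
    (hGb : ∃ C, ∀ x, ‖G x‖ ≤ C) (hneg : ∀ y ≤ 0, G 0 * K y = L y * G 0)
    (hpos : ∀ y > 0, deriv G y + G y * K y = L y * G y) :
    IsBoundedVolterraSolution L (G 0 Y₀) fun x => G (max x 0) (Y x) := by
  set Z : ℝ → E := fun x => G (max x 0) (Y x) with hZ
  have hcont : Continuous Z :=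
    (hG.continuous.comp (continuous_id.max continuous_const)).clm_apply hY.continuous
  obtain ⟨C, hC⟩ := hGb
  obtain ⟨D, hD⟩ := hY.bounded
  have hbound (x : ℝ) : ‖Z x‖ ≤ C * D := (G _).le_of_opNorm_le_of_le (hC _) (hD x)
  have hZneg (x : ℝ) (hx : x ≤ 0) : Z x = G 0 Y₀ + ∫ y in Iic x, L y (Z y) := by
    have hLZ : EqOn (fun y => L y (Z y)) (fun y => L y (G 0 (Y y))) (Iic x) := fun y hy => by
      simp only [hZ, max_eq_right (le_trans hy hx)]
    rw [setIntegral_congr_fun measurableSet_Iic hLZ, ← hY.clm_apply_eq_add_integral (hK x)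
      fun y hy => hneg y (hy.trans hx)]
    simp only [hZ, max_eq_right hx]
  have hZpos (x : ℝ) (hx : 0 ≤ x) : Z x = Z 0 + ∫ y in (0 : ℝ)..x, L y (Z y) := by
    have hLZ : EqOn (fun y => L y (Z y)) (fun y => L y (G y (Y y))) (uIcc 0 x) := fun y hy => by
      simp only [hZ, max_eq_left (uIcc_of_le hx ▸ hy).1]
    rw [intervalIntegral.integral_congr hLZ]
    simpa only [hZ, max_eq_left hx, max_self] using
      hY.clm_apply_eq_add_intervalIntegral hK hG (fun y hy => hpos y hy.1) hx
  refine ⟨hcont, ⟨_, hbound⟩, fun x => (le_total x 0).elim (hZneg x) fun hx => ?_⟩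
  rw [hZpos x hx, hZneg 0 le_rfl, add_assoc, ← integral_Iic_eq_add_intervalIntegral fun x =>
    integrable_clm_apply_of_bounded (hL x) hcont.aestronglyMeasurable hbound]

/-- Differentiating `H G = 1` gives `H' = -H G' H`. -/
theorem deriv_add_mul_eq_of_mul_eq_one {A : Type*} [NormedRing A] [NormedAlgebra ℝ A]
    {G H L R : ℝ → A} (hG : Differentiable ℝ G) (hH : Differentiable ℝ H)
    (hGH : ∀ y, G y * H y = 1) (hHG : ∀ y, H y * G y = 1) {y : ℝ}
    (h : deriv G y + G y * L y = R y * G y) : deriv H y + H y * R y = L y * H y := by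
  have hderiv : deriv H y * G y + H y * deriv G y = 0 := by
    rw [← deriv_fun_mul (hH y) (hG y), funext hHG, deriv_const]
  calc deriv H y + H y * R y
      = (deriv H y * G y + H y * (R y * G y)) * H y := by
        rw [add_mul, mul_assoc, hGH, mul_assoc (H y), mul_assoc (R y), hGH, mul_one, mul_one]
    _ = (deriv H y * G y + H y * deriv G y + H y * G y * L y) * H y := by
        rw [← h]
        noncomm_ring
    _ = L y * H y := by rw [hderiv, hHG, zero_add, one_mul]

theorem existsUnique_isBoundedVolterraSolution_of_gauge {L R G H : ℝ → E →L[ℝ] E} (Y₀ : E)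
    (hL : ∀ x, IntegrableOn L (Iic x)) (hR : IntegrableOn R (Ioi 0))
    (hG : ContDiff ℝ 1 G) (hH : ContDiff ℝ 1 H) (hGb : ∃ C, ∀ x, ‖G x‖ ≤ C)
    (hHb : ∃ C, ∀ x, ‖H x‖ ≤ C) (hGH : ∀ y, G y * H y = 1) (hHG : ∀ y, H y * G y = 1)
    (hgauge : ∀ y, deriv G y + G y * L y = R y * G y) :
    ∃! Y, IsBoundedVolterraSolution L Y₀ Y := by
  set K : ℝ → E →L[ℝ] E := (Iic 0).piecewise (fun y => G 0 * L y * H 0) R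
  have hKneg (y : ℝ) (hy : y ≤ 0) : K y = G 0 * L y * H 0 := piecewise_eq_of_mem _ _ _ hy
  have hKpos (y : ℝ) (hy : 0 < y) : K y = R y := piecewise_eq_of_notMem _ _ _ hy.not_ge
  have hGLH : IntegrableOn (fun y => G 0 * L y * H 0) (Iic 0) :=
    (Integrable.const_mul (hL 0) (G 0)).mul_const (H 0)
  have hR' : IntegrableOn R (Iic 0)ᶜ := by rwa [compl_Iic]
  have hK : Integrable K :=
    Integrable.piecewise (ε' := E →L[ℝ] E) measurableSet_Iic hGLH hR'
  have hK' (x : ℝ) : IntegrableOn K (Iic x) := hK.integrableOn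
  have hLK (Y : ℝ → E) (hY : IsBoundedVolterraSolution L Y₀ Y) :
      IsBoundedVolterraSolution K (G 0 Y₀) fun x => G (max x 0) (Y x) :=
    hY.gauge hL hK' hG hGb (fun y hy => by rw [hKneg y hy, mul_assoc, hHG, mul_one])
      fun y hy => by rw [hKpos y hy, hgauge]
  obtain ⟨Z, hZ, hunique⟩ := existsUnique_isBoundedVolterraSolution hK (G 0 Y₀)
  refine ⟨fun x => H (max x 0) (Z x), ?_, fun Y hY => ?_⟩
  · have hHKneg (y : ℝ) (hy : y ≤ 0) : H 0 * K y = L y * H 0 := by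
      rw [hKneg y hy, ← mul_assoc, ← mul_assoc, hHG, one_mul]
    have hHKpos (y : ℝ) (hy : 0 < y) : deriv H y + H y * K y = L y * H y := by
      rw [hKpos y hy]
      exact deriv_add_mul_eq_of_mul_eq_one (hG.differentiable one_ne_zero)
        (hH.differentiable one_ne_zero) hGH hHG (hgauge y)
    have hstart : H 0 (G 0 Y₀) = Y₀ := DFunLike.congr_fun (hHG 0) Y₀
    simpa only [hstart] using hZ.gauge hK' hL hH hHb hHKneg hHKpos
  · rw [← hunique _ (hLK Y hY)]
    exact funext fun x => (DFunLike.congr_fun (hHG (max x 0)) (Y x)).symm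

end Gauge

section Matrix

set_option maxSynthPendingDepth 3

/-- The `2 × 2` matrix `[[a, b], [c, d]]` acting on `ℂ × ℂ`, as a real-linear map. -/
noncomputable def matrixCLM (a b c d : ℂ) : ℂ × ℂ →L[ℝ] ℂ × ℂ :=
  a • (.inl ℝ ℂ ℂ ∘L .fst ℝ ℂ ℂ) + b • (.inl ℝ ℂ ℂ ∘L .snd ℝ ℂ ℂ) +
    c • (.inr ℝ ℂ ℂ ∘L .fst ℝ ℂ ℂ) + d • (.inr ℝ ℂ ℂ ∘L .snd ℝ ℂ ℂ)

@[simp]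
theorem matrixCLM_apply (a b c d : ℂ) (v : ℂ × ℂ) :
    matrixCLM a b c d v = (a * v.1 + b * v.2, c * v.1 + d * v.2) := by
  simp [matrixCLM]

theorem matrixCLM_one : matrixCLM 1 0 0 1 = 1 := by
  ext <;> simp

theorem matrixCLM_mul (a b c d a' b' c' d' : ℂ) :
    matrixCLM a b c d * matrixCLM a' b' c' d' = matrixCLM (a * a' + b * c') (a * b' + b * d')
      (c * a' + d * c') (c * b' + d * d') := by
  refine ContinuousLinearMap.ext fun v => ?_
  simp only [ContinuousLinearMap.mul_def, ContinuousLinearMap.comp_apply, matrixCLM_apply,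
    Prod.mk.injEq]
  constructor <;> ring

theorem matrixCLM_add (a b c d a' b' c' d' : ℂ) :
    matrixCLM a b c d + matrixCLM a' b' c' d' =
      matrixCLM (a + a') (b + b') (c + c') (d + d') := by
  simp only [matrixCLM, add_smul]
  abel

variable {a b c d : ℝ → ℂ}

theorem integrableOn_matrixCLM {s : Set ℝ} (ha : IntegrableOn a s) (hb : IntegrableOn b s)
    (hc : IntegrableOn c s) (hd : IntegrableOn d s) :
    IntegrableOn (fun y => matrixCLM (a y) (b y) (c y) (d y)) s :=
  (((ha.smul_const _).add (hb.smul_const _)).add (hc.smul_const _)).add (hd.smul_const _)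

theorem contDiff_matrixCLM {n : WithTop ℕ∞} (ha : ContDiff ℝ n a) (hb : ContDiff ℝ n b)
    (hc : ContDiff ℝ n c) (hd : ContDiff ℝ n d) :
    ContDiff ℝ n fun y => matrixCLM (a y) (b y) (c y) (d y) := by
  unfold matrixCLM
  fun_prop

theorem hasDerivAt_matrixCLM {a' b' c' d' : ℂ} {y : ℝ} (ha : HasDerivAt a a' y)
    (hb : HasDerivAt b b' y) (hc : HasDerivAt c c' y) (hd : HasDerivAt d d' y) :
    HasDerivAt (fun y => matrixCLM (a y) (b y) (c y) (d y)) (matrixCLM a' b' c' d') y :=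
  (((ha.smul_const _).add (hb.smul_const _)).add (hc.smul_const _)).add (hd.smul_const _)

theorem norm_matrixCLM_le (a b c d : ℂ) :
    ‖matrixCLM a b c d‖ ≤ max (‖a‖ + ‖b‖) (‖c‖ + ‖d‖) := by
  refine ContinuousLinearMap.opNorm_le_bound _ (by positivity) fun v => ?_
  have hrow (a b : ℂ) : ‖a * v.1 + b * v.2‖ ≤ (‖a‖ + ‖b‖) * ‖v‖ :=
    calc ‖a * v.1 + b * v.2‖ ≤ ‖a‖ * ‖v.1‖ + ‖b‖ * ‖v.2‖ :=
          norm_add_le_of_le (norm_mul _ _).le (norm_mul _ _).le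
      _ ≤ ‖a‖ * ‖v‖ + ‖b‖ * ‖v‖ := by
          gcongr
          exacts [norm_fst_le v, norm_snd_le v]
      _ = (‖a‖ + ‖b‖) * ‖v‖ := (add_mul _ _ _).symm
  rw [matrixCLM_apply, Prod.norm_def, max_mul_of_nonneg _ _ (norm_nonneg v)]
  exact max_le_max (hrow a b) (hrow c d)

end Matrix

section Phase

/-- The oscillating factor `exp (2iky)` of the second background solution. -/
noncomputable def phase (k y : ℝ) : ℂ :=
  Complex.exp (2 * I * k * y)

theorem contDiff_phase {n : WithTop ℕ∞} (k : ℝ) : ContDiff ℝ n (phase k) :=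
  (contDiff_const.mul ofRealCLM.contDiff).cexp

theorem continuous_phase (k : ℝ) : Continuous (phase k) :=
  (contDiff_phase (n := 0) k).continuous

theorem hasDerivAt_phase (k y : ℝ) : HasDerivAt (phase k) (2 * I * k * phase k y) y := by
  have h := ((ofRealCLM.hasDerivAt (x := y)).const_mul (2 * I * (k : ℂ))).cexp
  simp only [ofRealCLM_apply, ofReal_one, mul_one] at h
  rw [mul_comm (2 * I * (k : ℂ))]
  exact h

@[simp]
theorem norm_phase (k y : ℝ) : ‖phase k y‖ = 1 := by
  rw [phase, show 2 * I * (k : ℂ) * y = ((2 * k * y : ℝ) : ℂ) * I by push_cast; ring,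
    norm_exp_ofReal_mul_I]

theorem phase_mul_phase_neg (k y : ℝ) : phase k y * phase (-k) y = 1 := by
  simp [phase, ← Complex.exp_add]

theorem exp_sub_eq_phase_mul (k x y : ℝ) :
    Complex.exp (2 * I * (k : ℂ) * ((x : ℂ) - (y : ℂ))) = phase k x * phase (-k) y := by
  rw [phase, phase, ← Complex.exp_add]
  push_cast
  ring_nf

theorem integrableOn_phase_mul (k : ℝ) {f : ℝ → ℂ} {s : Set ℝ} (hf : IntegrableOn f s) :
    IntegrableOn (fun y => phase k y * f y) s :=
  Integrable.bdd_mul hf (continuous_phase k).aestronglyMeasurable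
    (ae_of_all _ fun y => (norm_phase k y).le)

end Phase

section Amplitudes

/-- The kernel of the Volterra equation for the left amplitudes `(u, s)` of a solution
`(ψ₁, ψ₃) = u (1, c) + s e^{2ikx} (0, 1)` of `ψ₁' = q ψ₃`, `ψ₃' = 2ik (ψ₃ - c ψ₁) + p ψ₁`. -/
noncomputable def leftKernel (c : ℂ) (k : ℝ) (q p : ℝ → ℂ) (y : ℝ) : ℂ × ℂ →L[ℝ] ℂ × ℂ :=
  matrixCLM (c * q y) (phase k y * q y) (phase (-k) y * (p y - c ^ 2 * q y)) (-(c * q y))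

/-- The kernel of the Volterra equation for the right amplitudes `(φ, h)` of a solution
`(ψ₁, ψ₃) = φ (1, 0) + h e^{2ikx} (c, 1)` of the system of `leftKernel`, where `f` and `r` stand
for `q - 2ikc` and `2ikc - p`. -/
noncomputable def rightKernel (c : ℂ) (k : ℝ) (f r : ℝ → ℂ) (y : ℝ) : ℂ × ℂ →L[ℝ] ℂ × ℂ :=
  matrixCLM (c * r y) (phase k y * (f y + c ^ 2 * r y)) (-(phase (-k) y * r y)) (-(c * r y))

/-- The change of coordinates from left to right amplitudes at the point `y`. -/
noncomputable def amplitudeTransition (c : ℂ) (k y : ℝ) : ℂ × ℂ →L[ℝ] ℂ × ℂ :=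
  matrixCLM (1 - c ^ 2) (-c * phase k y) (c * phase (-k) y) 1

/-- The change of coordinates from right to left amplitudes at the point `y`. -/
noncomputable def amplitudeTransitionInv (c : ℂ) (k y : ℝ) : ℂ × ℂ →L[ℝ] ℂ × ℂ :=
  matrixCLM 1 (c * phase k y) (-c * phase (-k) y) (1 - c ^ 2)

variable {c : ℂ} {k : ℝ} {q p : ℝ → ℂ}

theorem integrableOn_leftKernel {s : Set ℝ} (hq : IntegrableOn q s) (hp : IntegrableOn p s) :
    IntegrableOn (leftKernel c k q p) s :=
  integrableOn_matrixCLM (hq.const_mul c) (integrableOn_phase_mul k hq)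
    (integrableOn_phase_mul (-k) (hp.sub (hq.const_mul _))) (hq.const_mul c).neg

theorem integrableOn_rightKernel {f r : ℝ → ℂ} {s : Set ℝ} (hf : IntegrableOn f s)
    (hr : IntegrableOn r s) : IntegrableOn (rightKernel c k f r) s :=
  integrableOn_matrixCLM (hr.const_mul c) (integrableOn_phase_mul k (hf.add (hr.const_mul _)))
    (integrableOn_phase_mul (-k) hr).neg (hr.const_mul c).neg

theorem contDiff_amplitudeTransition {n : WithTop ℕ∞} :
    ContDiff ℝ n (amplitudeTransition c k) :=
  contDiff_matrixCLM contDiff_const (contDiff_const.mul (contDiff_phase k))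
    (contDiff_const.mul (contDiff_phase (-k))) contDiff_const

theorem contDiff_amplitudeTransitionInv {n : WithTop ℕ∞} :
    ContDiff ℝ n (amplitudeTransitionInv c k) :=
  contDiff_matrixCLM contDiff_const (contDiff_const.mul (contDiff_phase k))
    (contDiff_const.mul (contDiff_phase (-k))) contDiff_const

theorem norm_amplitudeTransition_le (c : ℂ) (k y : ℝ) :
    ‖amplitudeTransition c k y‖ ≤ max (‖1 - c ^ 2‖ + ‖c‖) (‖c‖ + 1) :=
  (norm_matrixCLM_le _ _ _ _).trans_eq (by simp)

theorem norm_amplitudeTransitionInv_le (c : ℂ) (k y : ℝ) :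
    ‖amplitudeTransitionInv c k y‖ ≤ max (1 + ‖c‖) (‖c‖ + ‖1 - c ^ 2‖) :=
  (norm_matrixCLM_le _ _ _ _).trans_eq (by simp)

theorem amplitudeTransition_mul_inv (c : ℂ) (k y : ℝ) :
    amplitudeTransition c k y * amplitudeTransitionInv c k y = 1 := by
  rw [amplitudeTransition, amplitudeTransitionInv, matrixCLM_mul, ← matrixCLM_one]
  congr 1
  · linear_combination c ^ 2 * phase_mul_phase_neg k y
  · ring
  · ring
  · linear_combination c ^ 2 * phase_mul_phase_neg k y

theorem amplitudeTransitionInv_mul (c : ℂ) (k y : ℝ) :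
    amplitudeTransitionInv c k y * amplitudeTransition c k y = 1 := by
  rw [amplitudeTransition, amplitudeTransitionInv, matrixCLM_mul, ← matrixCLM_one]
  congr 1
  · linear_combination c ^ 2 * phase_mul_phase_neg k y
  · ring
  · ring
  · linear_combination c ^ 2 * phase_mul_phase_neg k y

theorem deriv_amplitudeTransition (c : ℂ) (k y : ℝ) : deriv (amplitudeTransition c k) y =
    matrixCLM 0 (-c * (2 * I * k * phase k y)) (c * (2 * I * (-k : ℝ) * phase (-k) y)) 0 :=
  (hasDerivAt_matrixCLM (hasDerivAt_const y (1 - c ^ 2)) ((hasDerivAt_phase k y).const_mul (-c))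
    ((hasDerivAt_phase (-k) y).const_mul c) (hasDerivAt_const y 1)).deriv

theorem deriv_amplitudeTransition_add_mul_leftKernel (c : ℂ) (k : ℝ) (q p : ℝ → ℂ) (y : ℝ) :
    deriv (amplitudeTransition c k) y + amplitudeTransition c k y * leftKernel c k q p y =
      rightKernel c k (fun y => q y - 2 * I * k * c) (fun y => 2 * I * k * c - p y) y *
        amplitudeTransition c k y := by
  have hphase := phase_mul_phase_neg k y
  rw [deriv_amplitudeTransition, leftKernel, rightKernel, amplitudeTransition, matrixCLM_mul,
    matrixCLM_mul, matrixCLM_add]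
  push_cast
  congr 1
  · linear_combination (-c * (p y - c ^ 2 * q y) -
      c * (q y - 2 * I * k * c + c ^ 2 * (2 * I * k * c - p y))) * hphase
  · ring
  · ring
  · linear_combination (c * q y - c * (2 * I * k * c - p y)) * hphase

theorem existsUnique_isBoundedVolterraSolution_leftKernel (Y₀ : ℂ × ℂ)
    (hq : ∀ x, IntegrableOn q (Iic x)) (hp : ∀ x, IntegrableOn p (Iic x))
    (hq' : IntegrableOn (fun y => q y - 2 * I * k * c) (Ici 0))
    (hp' : IntegrableOn (fun y => p y - 2 * I * k * c) (Ici 0)) :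
    ∃! Y, IsBoundedVolterraSolution (leftKernel c k q p) Y₀ Y :=
  existsUnique_isBoundedVolterraSolution_of_gauge Y₀
    (fun x => integrableOn_leftKernel (hq x) (hp x))
    (integrableOn_rightKernel (hq'.mono_set Ioi_subset_Ici_self)
      (by simpa [Pi.neg_def] using (hp'.mono_set Ioi_subset_Ici_self).neg))
    contDiff_amplitudeTransition contDiff_amplitudeTransitionInv
    ⟨_, norm_amplitudeTransition_le c k⟩ ⟨_, norm_amplitudeTransitionInv_le c k⟩
    (amplitudeTransition_mul_inv c k) (amplitudeTransitionInv_mul c k)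
    (deriv_amplitudeTransition_add_mul_leftKernel c k q p)

end Amplitudes

section Jost

/-- `ψ = (ψ₁, ψ₃)` is a bounded continuous solution of the Volterra equations of the left Jost
solution, with `q`, `p` and `c` in place of `q₀`, `A - conj (q₀ (-·))` and `A / (2ik)`. -/
def IsBoundedJostSolution (c : ℂ) (k : ℝ) (q p : ℝ → ℂ) (ψ : (ℝ → ℂ) × (ℝ → ℂ)) : Prop :=
  (Continuous ψ.1 ∧ Continuous ψ.2 ∧
    (∃ C : ℝ, ∀ x : ℝ, ‖ψ.1 x‖ ≤ C) ∧ (∃ C : ℝ, ∀ x : ℝ, ‖ψ.2 x‖ ≤ C)) ∧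
  (∀ x : ℝ, ψ.1 x = 1 + ∫ y in Iic x, q y * ψ.2 y) ∧
  (∀ x : ℝ, ψ.2 x = c
    + (∫ y in Iic x, Complex.exp (2 * I * (k : ℂ) * ((x : ℂ) - (y : ℂ))) * p y * ψ.1 y)
    + c * ∫ y in Iic x,
        q y * (1 - Complex.exp (2 * I * (k : ℂ) * ((x : ℂ) - (y : ℂ)))) * ψ.2 y)

/-- The left amplitudes `(u, s)` of a pair of functions, determined by
`(ψ₁, ψ₃) = u (1, c) + s e^{2ikx} (0, 1)`. -/
noncomputable def leftAmplitudes (c : ℂ) (k : ℝ) : (ℝ → ℂ) × (ℝ → ℂ) ≃ (ℝ → ℂ × ℂ) where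
  toFun ψ x := (ψ.1 x, phase (-k) x * (ψ.2 x - c * ψ.1 x))
  invFun Y := (fun x => (Y x).1, fun x => phase k x * (Y x).2 + c * (Y x).1)
  left_inv ψ := Prod.ext rfl <| funext fun x => by
    linear_combination (ψ.2 x - c * ψ.1 x) * phase_mul_phase_neg k x
  right_inv Y := funext fun x => Prod.ext rfl <| by
    linear_combination (Y x).2 * phase_mul_phase_neg k x

variable {c : ℂ} {k : ℝ} {q p : ℝ → ℂ} {ψ : (ℝ → ℂ) × (ℝ → ℂ)}

theorem leftAmplitudes_apply (c : ℂ) (k : ℝ) (ψ : (ℝ → ℂ) × (ℝ → ℂ)) (x : ℝ) :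
    leftAmplitudes c k ψ x = (ψ.1 x, phase (-k) x * (ψ.2 x - c * ψ.1 x)) :=
  rfl

theorem eq_phase_mul_leftAmplitudes_snd_add (c : ℂ) (k : ℝ) (ψ : (ℝ → ℂ) × (ℝ → ℂ)) (x : ℝ) :
    ψ.2 x = phase k x * (leftAmplitudes c k ψ x).2 + c * ψ.1 x :=
  (congrFun (congrArg Prod.snd ((leftAmplitudes c k).left_inv ψ)) x).symm

theorem continuous_leftAmplitudes_iff :
    Continuous (leftAmplitudes c k ψ) ↔ Continuous ψ.1 ∧ Continuous ψ.2 := by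
  refine ⟨fun h => ⟨h.fst, ?_⟩, fun h => ?_⟩
  · rw [funext (eq_phase_mul_leftAmplitudes_snd_add c k ψ)]
    exact ((continuous_phase k).mul h.snd).add (h.fst.const_mul c)
  · exact h.1.prodMk ((continuous_phase (-k)).mul (h.2.sub (h.1.const_mul c)))

theorem exists_norm_leftAmplitudes_le_iff : (∃ C, ∀ x, ‖leftAmplitudes c k ψ x‖ ≤ C) ↔
    (∃ C, ∀ x, ‖ψ.1 x‖ ≤ C) ∧ ∃ C, ∀ x, ‖ψ.2 x‖ ≤ C := by
  constructor
  · rintro ⟨C, hC⟩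
    have hfst (x : ℝ) : ‖ψ.1 x‖ ≤ C := (norm_fst_le _).trans (hC x)
    refine ⟨⟨C, hfst⟩, C + ‖c‖ * C, fun x => ?_⟩
    rw [eq_phase_mul_leftAmplitudes_snd_add c k ψ x]
    exact norm_add_le_of_le (by simpa using (norm_snd_le _).trans (hC x))
      (norm_mul_le_of_le le_rfl (hfst x))
  · rintro ⟨⟨C, hC⟩, D, hD⟩
    refine ⟨max C (D + ‖c‖ * C), fun x => max_le_max (hC x) ?_⟩
    simpa [leftAmplitudes_apply] using norm_sub_le_of_le (hD x) (norm_mul_le_of_le le_rfl (hC x))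

theorem leftKernel_leftAmplitudes (c : ℂ) (k : ℝ) (q p : ℝ → ℂ) (ψ : (ℝ → ℂ) × (ℝ → ℂ))
    (y : ℝ) : leftKernel c k q p y (leftAmplitudes c k ψ y) =
      (q y * ψ.2 y, phase (-k) y * (p y * ψ.1 y - c * (q y * ψ.2 y))) := by
  rw [leftKernel, matrixCLM_apply, leftAmplitudes_apply, Prod.mk.injEq]
  constructor
  · linear_combination q y * (ψ.2 y - c * ψ.1 y) * phase_mul_phase_neg k y
  · ring

theorem jost_snd_rhs_eq {u v : ℝ → ℂ} {x : ℝ} (hpu : IntegrableOn (fun y => p y * u y) (Iic x))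
    (hqv : IntegrableOn (fun y => q y * v y) (Iic x)) :
    c + (∫ y in Iic x, Complex.exp (2 * I * (k : ℂ) * ((x : ℂ) - (y : ℂ))) * p y * u y) +
      c * ∫ y in Iic x, q y * (1 - Complex.exp (2 * I * (k : ℂ) * ((x : ℂ) - (y : ℂ)))) * v y =
    c * (1 + ∫ y in Iic x, q y * v y) +
      phase k x * ∫ y in Iic x, phase (-k) y * (p y * u y - c * (q y * v y)) := by
  have hpu' := integrableOn_phase_mul (-k) hpu
  have hqv' := integrableOn_phase_mul (-k) hqv
  have hexp : ∫ y in Iic x, Complex.exp (2 * I * (k : ℂ) * ((x : ℂ) - (y : ℂ))) * p y * u y =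
      phase k x * ∫ y in Iic x, phase (-k) y * (p y * u y) := by
    rw [← integral_const_mul]
    congr with y
    rw [exp_sub_eq_phase_mul]
    ring
  have hone_sub_exp :
      ∫ y in Iic x, q y * (1 - Complex.exp (2 * I * (k : ℂ) * ((x : ℂ) - (y : ℂ)))) * v y =
      (∫ y in Iic x, q y * v y) - phase k x * ∫ y in Iic x, phase (-k) y * (q y * v y) := by
    rw [← integral_const_mul, ← integral_sub hqv (hqv'.const_mul _)]
    congr with y
    rw [exp_sub_eq_phase_mul]
    ring
  have hsub : ∫ y in Iic x, phase (-k) y * (p y * u y - c * (q y * v y)) =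
      (∫ y in Iic x, phase (-k) y * (p y * u y)) -
        c * ∫ y in Iic x, phase (-k) y * (q y * v y) := by
    rw [← integral_const_mul, ← integral_sub hpu' (hqv'.const_mul _)]
    congr with y
    ring
  rw [hexp, hone_sub_exp, hsub]
  ring

theorem leftAmplitudes_eq_add_integral_iff {x : ℝ}
    (hpu : IntegrableOn (fun y => p y * ψ.1 y) (Iic x))
    (hqv : IntegrableOn (fun y => q y * ψ.2 y) (Iic x)) :
    leftAmplitudes c k ψ x =
        (1, 0) + ∫ y in Iic x, leftKernel c k q p y (leftAmplitudes c k ψ y) ↔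
      ψ.1 x = 1 + (∫ y in Iic x, q y * ψ.2 y) ∧
      ψ.2 x = c +
        (∫ y in Iic x, Complex.exp (2 * I * (k : ℂ) * ((x : ℂ) - (y : ℂ))) * p y * ψ.1 y) +
        c * ∫ y in Iic x,
          q y * (1 - Complex.exp (2 * I * (k : ℂ) * ((x : ℂ) - (y : ℂ)))) * ψ.2 y := by
  have hsnd : IntegrableOn (fun y => phase (-k) y * (p y * ψ.1 y - c * (q y * ψ.2 y))) (Iic x) :=
    integrableOn_phase_mul (-k) (hpu.sub (hqv.const_mul c))
  simp only [leftKernel_leftAmplitudes]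
  rw [integral_pair hqv hsnd, jost_snd_rhs_eq hpu hqv, leftAmplitudes_apply, Prod.mk_add_mk,
    Prod.mk.injEq, zero_add]
  refine and_congr_right fun hfst => ?_
  rw [← hfst, ← sub_eq_iff_eq_add', ← mul_right_inj' (left_ne_zero_of_mul_eq_one
    (phase_mul_phase_neg k x)), ← mul_assoc, phase_mul_phase_neg, one_mul]

theorem isBoundedVolterraSolution_leftAmplitudes_iff (hq : ∀ x, IntegrableOn q (Iic x))
    (hp : ∀ x, IntegrableOn p (Iic x)) :
    IsBoundedVolterraSolution (leftKernel c k q p) (1, 0) (leftAmplitudes c k ψ) ↔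
      IsBoundedJostSolution c k q p ψ := by
  have hpψ (h : Continuous ψ.1) (hb : ∃ C, ∀ x, ‖ψ.1 x‖ ≤ C) (x : ℝ) :
      IntegrableOn (fun y => p y * ψ.1 y) (Iic x) :=
    let ⟨_, hC⟩ := hb
    (hp x).mul_bdd h.aestronglyMeasurable (ae_of_all _ hC)
  have hqψ (h : Continuous ψ.2) (hb : ∃ C, ∀ x, ‖ψ.2 x‖ ≤ C) (x : ℝ) :
      IntegrableOn (fun y => q y * ψ.2 y) (Iic x) :=
    let ⟨_, hC⟩ := hb
    (hq x).mul_bdd h.aestronglyMeasurable (ae_of_all _ hC)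
  constructor
  · intro h
    obtain ⟨h₁, h₂⟩ := continuous_leftAmplitudes_iff.1 h.continuous
    obtain ⟨hb₁, hb₂⟩ := exists_norm_leftAmplitudes_le_iff.1 h.bounded
    have heq (x : ℝ) := (leftAmplitudes_eq_add_integral_iff (hpψ h₁ hb₁ x) (hqψ h₂ hb₂ x)).1
      (h.eq_add_integral x)
    exact ⟨⟨h₁, h₂, hb₁, hb₂⟩, fun x => (heq x).1, fun x => (heq x).2⟩
  · rintro ⟨⟨h₁, h₂, hb₁, hb₂⟩, hfst, hsnd⟩
    exact ⟨continuous_leftAmplitudes_iff.2 ⟨h₁, h₂⟩,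
      exists_norm_leftAmplitudes_le_iff.2 ⟨hb₁, hb₂⟩, fun x =>
      (leftAmplitudes_eq_add_integral_iff (hpψ h₁ hb₁ x) (hqψ h₂ hb₂ x)).2 ⟨hfst x, hsnd x⟩⟩

end Jost

theorem integrableOn_Iic_of_sub_const {E : Type*} [NormedAddCommGroup E] {f : ℝ → E} {a : E}
    (hneg : IntegrableOn f (Iic 0)) (hpos : IntegrableOn (fun y => f y - a) (Ici 0)) (x : ℝ) :
    IntegrableOn f (Iic x) := by
  have hIcc : IntegrableOn f (Icc 0 x) := by
    have hconst : IntegrableOn (fun _ => a) (Icc 0 x) := integrableOn_const (by simp)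
    simpa [Pi.add_def] using (hpos.mono_set Icc_subset_Ici_self).add hconst
  exact (hneg.union hIcc).mono_set fun y hy => (le_total y 0).imp id fun h => ⟨h, hy⟩

theorem jost_volterra_existence_uniqueness_general {c : ℂ} {k : ℝ} {q p : ℝ → ℂ}
    (hq : IntegrableOn q (Iic 0)) (hq' : IntegrableOn (fun y => q y - 2 * I * k * c) (Ici 0))
    (hp : IntegrableOn p (Iic 0)) (hp' : IntegrableOn (fun y => p y - 2 * I * k * c) (Ici 0)) :
    ∃! ψ : (ℝ → ℂ) × (ℝ → ℂ), IsBoundedJostSolution c k q p ψ := by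
  have hqx := integrableOn_Iic_of_sub_const hq hq'
  have hpx := integrableOn_Iic_of_sub_const hp hp'
  have hamp := existsUnique_isBoundedVolterraSolution_leftKernel (1, 0) hqx hpx hq' hp'
  exact ((leftAmplitudes c k).existsUnique_congr fun _ =>
    (isBoundedVolterraSolution_leftAmplitudes_iff hqx hpx).symm).2 hamp

theorem integrableOn_conj_comp_neg {f : ℝ → ℂ} {s : Set ℝ} (hf : IntegrableOn f s) :
    IntegrableOn (fun y => (starRingEnd ℂ) (f (-y))) (-s) := by
  have hneg : IntegrableOn (fun y => f (-y)) (-s) :=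
    ((Measure.measurePreserving_neg (volume : Measure ℝ)).integrableOn_comp_preimage
      (Homeomorph.neg ℝ).measurableEmbedding).2 hf
  exact (Complex.conjCLE : ℂ →L[ℝ] ℂ).integrable_comp hneg

/-- Existence and uniqueness of bounded continuous solutions (ψ₁, ψ₃) of the Volterra
integral equations for the left Jost solution of the NNLS equation with step-like
initial datum q₀ (q₀ integrable at −∞, q₀ − A integrable at +∞), for each real k ≠ 0. -/
theorem jost_volterra_existence_uniqueness (A : ℝ) (hA : 0 < A) (q₀ : ℝ → ℂ)
    (hmeas : Measurable q₀)
    (hintNeg : IntegrableOn q₀ (Set.Iic 0))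
    (hintPos : IntegrableOn (fun y => q₀ y - (A : ℂ)) (Set.Ici 0))
    (k : ℝ) (hk : k ≠ 0) :
    ∃! p : (ℝ → ℂ) × (ℝ → ℂ),
      (Continuous p.1 ∧ Continuous p.2 ∧
        (∃ C : ℝ, ∀ x : ℝ, ‖p.1 x‖ ≤ C) ∧ (∃ C : ℝ, ∀ x : ℝ, ‖p.2 x‖ ≤ C)) ∧
      (∀ x : ℝ,
        p.1 x = 1 + ∫ y in Set.Iic x, q₀ y * p.2 y) ∧
      (∀ x : ℝ,
        p.2 x = (A : ℂ) / (2 * I * k)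
          + (∫ y in Set.Iic x,
              Complex.exp (2 * I * (k : ℂ) * ((x : ℂ) - (y : ℂ)))
                * ((A : ℂ) - (starRingEnd ℂ) (q₀ (-y))) * p.1 y)
          + ((A : ℂ) / (2 * I * k))
              * ∫ y in Set.Iic x,
                  q₀ y * (1 - Complex.exp (2 * I * (k : ℂ) * ((x : ℂ) - (y : ℂ))))
                    * p.2 y) := by
  have hc : 2 * I * k * ((A : ℂ) / (2 * I * k)) = A := mul_div_cancel₀ _ (by simp [hk])
  have hpNeg : IntegrableOn (fun y => (A : ℂ) - (starRingEnd ℂ) (q₀ (-y))) (Iic 0) := by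
    simpa [Pi.neg_def] using (integrableOn_conj_comp_neg hintPos).neg
  have hpPos : IntegrableOn (fun y => (A : ℂ) - (starRingEnd ℂ) (q₀ (-y)) - A) (Ici 0) := by
    simpa [Pi.neg_def] using (integrableOn_conj_comp_neg hintNeg).neg
  exact jost_volterra_existence_uniqueness_general hintNeg (by rwa [hc]) hpNeg (by rwa [hc])
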